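/- Let ‖·‖_p be any norm on D×D real matrices with dual norm ‖·‖_d, and set σ(‖G‖_p) = sup{‖Z‖_F : ‖Z‖_d = 1}. Let Δ > 0, let g be a standard Gaussian random vector in ℝ^M, and let G, G₁, …, G_M be i.i.d. random D×D matrices with entries i.i.d. standard Gaussian N(0,1), independent of g. Then E[ sup over unit vectors v ∈ ℝ^M and matrices Y with ‖Y‖_d = 1 of ( Δ·⟨g, v⟩ + ⟨Σ_{i=1}^M v_i G_i, Y⟩ ) ] ≤ E[‖G‖_p] + √(M·(Δ² + σ(‖G‖_p)²)). -/

import Mathlib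

open Matrix MeasureTheory ProbabilityTheory

/-- The trace inner product `⟨X, Y⟩ = trace(Xᵀ Y)` on real matrices. -/
noncomputable def matInner {m n : Type*} [Fintype m] [Fintype n]
    (X Y : Matrix m n ℝ) : ℝ :=
  Matrix.trace (Xᵀ * Y)

/-- The dual norm `‖X‖_d = sup {⟨Y, X⟩ : ‖Y‖_p = 1}` of a norm `N` on matrices. -/
noncomputable def dualNorm {D : Type*} [Fintype D]
    (N : Matrix D D ℝ → ℝ) (X : Matrix D D ℝ) : ℝ :=
  sSup {c : ℝ | ∃ Y : Matrix D D ℝ, N Y = 1 ∧ c = matInner Y X}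

/-- `σ(‖G‖_p) = sup {‖Z‖_F : ‖Z‖_d = 1}`. -/
noncomputable def sigmaP {D : Type*} [Fintype D] (N : Matrix D D ℝ → ℝ) : ℝ :=
  sSup {c : ℝ | ∃ Z : Matrix D D ℝ, dualNorm N Z = 1 ∧
    c = Real.sqrt (∑ i, ∑ j, Z i j ^ 2)}

/-- The law of a `D × D` random matrix (presented as `Fin D → Fin D → ℝ`) with
i.i.d. standard Gaussian `N(0,1)` entries. -/
noncomputable def iidGaussianMatrix (D : ℕ) : Measure (Fin D → Fin D → ℝ) :=
  Measure.pi fun _ : Fin D => Measure.pi fun _ : Fin D => gaussianReal 0 1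


open Real Filter Topology

/-- standard Gaussian on `ι → ℝ` -/
noncomputable abbrev stdG (ι : Type*) [Fintype ι] : Measure (ι → ℝ) :=
  Measure.pi fun _ : ι => gaussianReal 0 1

lemma stein_one (f f' : ℝ → ℝ) (C C' : ℝ) (hf : ∀ x, HasDerivAt f (f' x) x)
    (hC : ∀ x, |f x| ≤ C) (hC' : ∀ x, |f' x| ≤ C') (hcont : Continuous f') :
    ∫ x, x * f x ∂(gaussianReal 0 1) = ∫ x, f' x ∂(gaussianReal 0 1) := by
  have hfc : Continuous f := continuous_iff_continuousAt.2 fun x => (hf x).continuousAt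
  rw [integral_gaussianReal_eq_integral_smul one_ne_zero,
    integral_gaussianReal_eq_integral_smul one_ne_zero]
  have hpdf : ∀ x, HasDerivAt (gaussianPDFReal 0 1) (-(x * gaussianPDFReal 0 1 x)) x := by
    intro x
    have h1 : HasDerivAt (fun x : ℝ => -(x - 0) ^ 2 / (2 * ((1 : NNReal) : ℝ))) (-x) x := by
      have := (((hasDerivAt_id x).sub_const 0).pow 2).neg.div_const (2 * ((1 : NNReal) : ℝ))
      refine this.congr_deriv ?_
      simp; ring
    have h2 := (h1.exp).const_mul (√(2 * π * ((1 : NNReal) : ℝ)))⁻¹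
    have h3 := h2.congr_deriv (g' := -(x * gaussianPDFReal 0 1 x))
      (by rw [gaussianPDFReal_def]; ring)
    rw [gaussianPDFReal_def] at h3 ⊢
    exact h3
  have hpc : Continuous (gaussianPDFReal 0 1) :=
    continuous_iff_continuousAt.2 fun x => (hpdf x).continuousAt
  have hp : Integrable (gaussianPDFReal 0 1) := integrable_gaussianPDFReal 0 1
  have hxp : Integrable (fun x => x * gaussianPDFReal 0 1 x) := by
    have h := integrable_mul_exp_neg_mul_sq (b := 1/2) (by norm_num)
    have h2 := h.const_mul (√(2 * π))⁻¹
    refine h2.congr (ae_of_all _ fun x => ?_)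
    simp only [gaussianPDFReal_def]
    have : -(x - 0) ^ 2 / (2 * ((1 : NNReal) : ℝ)) = -(1/2) * x ^ 2 := by
      simp; ring
    rw [this]; simp; ring
  have key := integral_mul_deriv_eq_deriv_mul_of_integrable (u := gaussianPDFReal 0 1)
    (u' := fun x => -(x * gaussianPDFReal 0 1 x)) (v := f) (v' := f')
    (fun x _ => hpdf x) (fun x _ => hf x) ?_ ?_ ?_
  · simp only [smul_eq_mul]
    rw [key, ← integral_neg]
    congr 1; ext x; ring
  · exact hp.mul_bdd (c := C') hcont.aestronglyMeasurable (ae_of_all _ hC')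
  · exact hxp.neg.mul_bdd (c := C) hfc.aestronglyMeasurable (ae_of_all _ hC)
  · exact hp.mul_bdd (c := C) hfc.aestronglyMeasurable (ae_of_all _ hC)

lemma integrable_coord {ι : Type*} [Fintype ι] (i : ι) :
    Integrable (fun w : ι → ℝ => w i) (stdG ι) := by
  have h : Integrable (fun x : ℝ => x) (gaussianReal 0 1) :=
    (memLp_id_gaussianReal 1).integrable (by simp)
  exact (measurePreserving_eval (fun _ : ι => gaussianReal 0 1) i).integrable_comp_of_integrable h

lemma mp_integral {α β : Type*} [MeasurableSpace α] [MeasurableSpace β] {μ : Measure α}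
    {ν : Measure β} {g : α → β} (h : MeasurePreserving g μ ν) {f : β → ℝ}
    (hf : AEStronglyMeasurable f ν) : ∫ y, f y ∂ν = ∫ x, f (g x) ∂μ := by
  have hm := h.map_eq
  subst hm
  exact integral_map h.measurable.aemeasurable hf

lemma mp_update {ι : Type*} [Fintype ι] [DecidableEq ι] (i : ι) :
    MeasurePreserving (fun q : (ι → ℝ) × ℝ => Function.update q.1 i q.2)
      ((stdG ι).prod (gaussianReal 0 1)) (stdG ι) := by
  have hm : Measurable (fun q : (ι → ℝ) × ℝ => Function.update q.1 i q.2) := by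
    rw [measurable_pi_iff]
    intro j
    by_cases h : j = i
    · subst h; simpa using measurable_snd
    · simp only [Function.update_of_ne h]; fun_prop
  refine ⟨hm, ?_⟩
  symm
  refine Measure.pi_eq fun s hs => ?_
  rw [Measure.map_apply hm (MeasurableSet.univ_pi hs)]
  have : (fun q : (ι → ℝ) × ℝ => Function.update q.1 i q.2) ⁻¹' Set.univ.pi s
      = (Set.univ.pi (Function.update s i Set.univ)) ×ˢ (s i) := by
    ext q
    simp only [Set.mem_preimage, Set.mem_pi, Set.mem_univ, true_imp_iff, Set.mem_prod]
    constructor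
    · intro h
      refine ⟨fun j => ?_, by simpa using h i⟩
      by_cases hj : j = i
      · subst hj; simp
      · simpa [Function.update_of_ne hj] using h j
    · rintro ⟨h1, h2⟩ j
      by_cases hj : j = i
      · subst hj; simpa using h2
      · simpa [Function.update_of_ne hj] using h1 j
  rw [this, Measure.prod_prod, Measure.pi_pi, ← Finset.mul_prod_erase _ _ (Finset.mem_univ i),
    ← Finset.mul_prod_erase Finset.univ (fun j => gaussianReal 0 1 (s j)) (Finset.mem_univ i)]
  simp only [Function.update_self, measure_univ, one_mul]
  rw [mul_comm]
  congr 1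
  refine Finset.prod_congr rfl fun j hj => ?_
  rw [Function.update_of_ne (Finset.ne_of_mem_erase hj)]

lemma stein_pi {ι : Type*} [Fintype ι] [DecidableEq ι] (i : ι) (f f' : (ι → ℝ) → ℝ) (C C' : ℝ)
    (hf : ∀ w x, HasDerivAt (fun t => f (Function.update w i t)) (f' (Function.update w i x)) x)
    (hfc : Continuous f) (hcont : Continuous f')
    (hC : ∀ x, |f x| ≤ C) (hC' : ∀ x, |f' x| ≤ C') :
    ∫ w, w i * f w ∂(stdG ι) = ∫ w, f' w ∂(stdG ι) := by
  have hmp := mp_update i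
  have hi1 : Integrable (fun w : ι → ℝ => w i * f w) (stdG ι) :=
    (integrable_coord i).mul_bdd (c := C) hfc.aestronglyMeasurable (ae_of_all _ hC)
  have hi2 : Integrable f' (stdG ι) :=
    Integrable.of_bound hcont.aestronglyMeasurable C' (ae_of_all _ hC')
  have e1 : ∫ w, w i * f w ∂(stdG ι) = ∫ q, (fun w : ι → ℝ => w i * f w) (Function.update q.1 i q.2)
      ∂((stdG ι).prod (gaussianReal 0 1)) := mp_integral hmp hi1.aestronglyMeasurable
  have e2 : ∫ w, f' w ∂(stdG ι) = ∫ q, f' (Function.update q.1 i q.2)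
      ∂((stdG ι).prod (gaussianReal 0 1)) := mp_integral hmp hi2.aestronglyMeasurable
  have j1 := integral_prod _ (hmp.integrable_comp_of_integrable hi1)
  have j2 := integral_prod _ (hmp.integrable_comp_of_integrable hi2)
  simp only [Function.comp_def] at j1 j2
  rw [e1, e2, j1, j2]
  congr 1; ext w
  simp only [Function.update_self]
  refine stein_one _ _ C C' (hf w) (fun _ => hC _) (fun _ => hC' _) ?_
  exact hcont.comp (continuous_const.update i continuous_id)

section SF

variable {A ι : Type*} [Fintype A] [Fintype ι]

noncomputable def lin (c w : ι → ℝ) : ℝ := ∑ i, c i * w i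

noncomputable def sumExp (u : A → ι → ℝ) (w : ι → ℝ) : ℝ := ∑ a, exp (lin (u a) w)

noncomputable def gibbs (u : A → ι → ℝ) (a : A) (w : ι → ℝ) : ℝ :=
  exp (lin (u a) w) / sumExp u w

@[fun_prop]
lemma continuous_lin (c : ι → ℝ) : Continuous (lin c) := by
  unfold lin; fun_prop

@[fun_prop]
lemma continuous_sumExp (u : A → ι → ℝ) : Continuous (sumExp u) := by
  unfold sumExp; fun_prop

lemma sumExp_pos [Nonempty A] (u : A → ι → ℝ) (w : ι → ℝ) : 0 < sumExp u w :=
  Finset.sum_pos (fun _ _ => exp_pos _) Finset.univ_nonempty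

@[fun_prop]
lemma continuous_gibbs [Nonempty A] (u : A → ι → ℝ) (a : A) : Continuous (gibbs u a) := by
  unfold gibbs
  exact Continuous.div (by fun_prop) (by fun_prop) fun w => (sumExp_pos u w).ne'

lemma gibbs_nonneg [Nonempty A] (u : A → ι → ℝ) (a : A) (w : ι → ℝ) : 0 ≤ gibbs u a w :=
  div_nonneg (exp_pos _).le (sumExp_pos u w).le

lemma gibbs_sum [Nonempty A] (u : A → ι → ℝ) (w : ι → ℝ) : ∑ a, gibbs u a w = 1 := by
  unfold gibbs
  rw [← Finset.sum_div]
  exact div_self (sumExp_pos u w).ne'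

lemma gibbs_le_one [Nonempty A] (u : A → ι → ℝ) (a : A) (w : ι → ℝ) : gibbs u a w ≤ 1 := by
  rw [← gibbs_sum u w]
  exact Finset.single_le_sum (fun b _ => gibbs_nonneg u b w) (Finset.mem_univ a)

lemma abs_gibbs_le [Nonempty A] (u : A → ι → ℝ) (a : A) (w : ι → ℝ) : |gibbs u a w| ≤ 1 := by
  rw [abs_of_nonneg (gibbs_nonneg u a w)]; exact gibbs_le_one u a w

lemma hasDerivAt_lin_update [DecidableEq ι] (c w : ι → ℝ) (i : ι) (x : ℝ) :
    HasDerivAt (fun t => lin c (Function.update w i t)) (c i) x := by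
  have h : ∀ j ∈ (Finset.univ : Finset ι), HasDerivAt
      (fun t => c j * Function.update w i t j) (if j = i then c i else 0) x := by
    intro j _
    by_cases hj : j = i
    · subst hj
      simpa using (hasDerivAt_id x).const_mul (c j)
    · simpa [Function.update_of_ne hj, hj] using hasDerivAt_const x (c j * w j)
  have := HasDerivAt.fun_sum h
  simpa [lin] using this

lemma stein_gibbs [Nonempty A] (u : A → ι → ℝ) (a : A) (i : ι) :
    ∫ w, w i * gibbs u a w ∂(stdG ι) =
      ∫ w, gibbs u a w * (u a i - ∑ b, gibbs u b w * u b i) ∂(stdG ι) := by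
  classical
  refine stein_pi i (gibbs u a) _ 1 (|u a i| + ∑ b, |u b i|) ?_ (by fun_prop) (by fun_prop)
    (abs_gibbs_le u a) ?_
  · intro w x
    have h1 : ∀ b, HasDerivAt (fun t => exp (lin (u b) (Function.update w i t)))
      (exp (lin (u b) (Function.update w i x)) * u b i) x := fun b =>
      (hasDerivAt_lin_update (u b) w i x).exp
    have h2 : HasDerivAt (fun t => sumExp u (Function.update w i t))
      (∑ b, exp (lin (u b) (Function.update w i x)) * u b i) x :=
      HasDerivAt.fun_sum fun b _ => h1 b
    have hS := (sumExp_pos u (Function.update w i x)).ne'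
    refine ((h1 a).div h2 hS).congr_deriv ?_
    simp only [gibbs]
    have : ∑ b, exp (lin (u b) (Function.update w i x)) / sumExp u (Function.update w i x) * u b i
        = (∑ b, exp (lin (u b) (Function.update w i x)) * u b i) /
          sumExp u (Function.update w i x) := by
      rw [Finset.sum_div]
      exact Finset.sum_congr rfl fun b _ => by ring
    rw [this]
    field_simp
  · intro w
    rw [abs_mul]
    calc |gibbs u a w| * |u a i - ∑ b, gibbs u b w * u b i|
        ≤ 1 * |u a i - ∑ b, gibbs u b w * u b i| := by
          gcongr; exact abs_gibbs_le u a w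
      _ = |u a i - ∑ b, gibbs u b w * u b i| := one_mul _
      _ ≤ |u a i| + |∑ b, gibbs u b w * u b i| := abs_sub _ _
      _ ≤ |u a i| + ∑ b, |gibbs u b w * u b i| := by
          gcongr; exact Finset.abs_sum_le_sum_abs _ _
      _ ≤ _ := by
          refine add_le_add le_rfl (Finset.sum_le_sum fun b _ => ?_)
          rw [abs_mul]
          calc _ ≤ 1 * |u b i| := by gcongr; exact abs_gibbs_le u b w
            _ = _ := one_mul _

lemma integrable_lin (c : ι → ℝ) : Integrable (lin c) (stdG ι) := by
  unfold lin
  exact integrable_finsetSum _ fun i _ => (integrable_coord i).const_mul _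

lemma gibbs_alg (p α β : A → ℝ) (hp : ∑ a, p a = 1) :
    ∑ a, ∑ b, p a * p b * ((α a - α b) * (β a - β b)) =
      2 * ∑ a, α a * (p a * (β a - ∑ b, p b * β b)) := by
  have h1 : ∑ a, α a * (p a * (β a - ∑ b, p b * β b)) =
      (∑ a, p a * α a * β a) - (∑ a, p a * α a) * ∑ b, p b * β b := by
    rw [Finset.sum_mul, ← Finset.sum_sub_distrib]
    exact Finset.sum_congr rfl fun a _ => by ring
  have h2 : ∑ a, ∑ b, p a * p b * ((α a - α b) * (β a - β b)) =
      (∑ a, p a * α a * β a) * (∑ b, p b) - (∑ a, p a * α a) * (∑ b, p b * β b)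
      - (∑ a, p a * β a) * (∑ b, p b * α b) + (∑ a, p a) * (∑ b, p b * α b * β b) := by
    simp only [Finset.sum_mul_sum, ← Finset.sum_sub_distrib, ← Finset.sum_add_distrib]
    exact Finset.sum_congr rfl fun a _ => Finset.sum_congr rfl fun b _ => by ring
  rw [h1, h2, hp]; ring

/-- the derivative is nonnegative -/
lemma deriv_nonneg [Nonempty A] (u u' : A → ι → ℝ)
    (h : ∀ a b, 0 ≤ ∑ i, (u' a i - u' b i) * (u a i - u b i)) :
    0 ≤ ∫ w, ∑ a, gibbs u a w * lin (u' a) w ∂(stdG ι) := by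
  have hi1 : ∀ a i, Integrable (fun w : ι → ℝ => w i * gibbs u a w) (stdG ι) := fun a i =>
    (integrable_coord i).mul_bdd (c := 1) (continuous_gibbs u a).aestronglyMeasurable
      (ae_of_all _ (abs_gibbs_le u a))
  have hg : ∀ a, Integrable (gibbs u a) (stdG ι) := fun a =>
    Integrable.of_bound (continuous_gibbs u a).aestronglyMeasurable 1
      (ae_of_all _ (abs_gibbs_le u a))
  have hi2 : ∀ a i, Integrable (fun w : ι → ℝ => gibbs u a w *
      (u a i - ∑ b, gibbs u b w * u b i)) (stdG ι) := by
    intro a i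
    have : Integrable (fun w : ι → ℝ => (u a i - ∑ b, gibbs u b w * u b i)) (stdG ι) :=
      (integrable_const _).sub (integrable_finsetSum _ fun b _ => (hg b).mul_const _)
    exact this.bdd_mul (c := 1) (continuous_gibbs u a).aestronglyMeasurable
      (ae_of_all _ (abs_gibbs_le u a))
  have e1 : ∫ w, ∑ a, gibbs u a w * lin (u' a) w ∂(stdG ι) =
      ∑ a, ∑ i, u' a i * ∫ w, w i * gibbs u a w ∂(stdG ι) := by
    have : ∀ w, ∑ a, gibbs u a w * lin (u' a) w = ∑ a, ∑ i, u' a i * (w i * gibbs u a w) := by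
      intro w
      refine Finset.sum_congr rfl fun a _ => ?_
      rw [lin, Finset.mul_sum]
      exact Finset.sum_congr rfl fun i _ => by ring
    simp_rw [this]
    rw [integral_finsetSum _ fun a _ => integrable_finsetSum _ fun i _ => (hi1 a i).const_mul _]
    refine Finset.sum_congr rfl fun a _ => ?_
    rw [integral_finsetSum _ fun i _ => (hi1 a i).const_mul _]
    exact Finset.sum_congr rfl fun i _ => integral_const_mul _ _
  rw [e1]
  simp_rw [stein_gibbs]
  have e2 : ∑ a, ∑ i, u' a i * ∫ w, gibbs u a w * (u a i - ∑ b, gibbs u b w * u b i) ∂(stdG ι)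
      = ∫ w, ∑ a, ∑ i, u' a i * (gibbs u a w * (u a i - ∑ b, gibbs u b w * u b i)) ∂(stdG ι) := by
    rw [integral_finsetSum _ fun a _ => integrable_finsetSum _ fun i _ => (hi2 a i).const_mul _]
    refine Finset.sum_congr rfl fun a _ => ?_
    rw [integral_finsetSum _ fun i _ => (hi2 a i).const_mul _]
    exact Finset.sum_congr rfl fun i _ => (integral_const_mul _ _).symm
  rw [e2]
  refine integral_nonneg fun w => ?_
  simp only [Pi.zero_apply]
  have hp := gibbs_sum u w
  have hn : ∀ a, 0 ≤ gibbs u a w := fun a => gibbs_nonneg u a w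
  rw [Finset.sum_comm]
  have h3 : 2 * ∑ i, ∑ a, u' a i * (gibbs u a w * (u a i - ∑ b, gibbs u b w * u b i)) =
      ∑ a, ∑ b, gibbs u a w * gibbs u b w * ∑ i, (u' a i - u' b i) * (u a i - u b i) := by
    rw [Finset.mul_sum]
    simp_rw [← gibbs_alg (fun a => gibbs u a w) (fun a => u' a _) (fun a => u a _) hp,
      Finset.mul_sum]
    rw [Finset.sum_comm]
    exact Finset.sum_congr rfl fun a _ => Finset.sum_comm
  have h4 : 0 ≤ ∑ a, ∑ b, gibbs u a w * gibbs u b w * ∑ i, (u' a i - u' b i) * (u a i - u b i) :=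
    Finset.sum_nonneg fun a _ => Finset.sum_nonneg fun b _ =>
      mul_nonneg (mul_nonneg (hn a) (hn b)) (h a b)
  linarith

lemma integrable_sum_abs : Integrable (fun w : ι → ℝ => ∑ i, |w i|) (stdG ι) :=
  integrable_finsetSum _ fun i _ => (integrable_coord i).abs

lemma abs_lin_le (c w : ι → ℝ) : |lin c w| ≤ (∑ i, |c i|) * ∑ i, |w i| := by
  unfold lin
  refine (Finset.abs_sum_le_sum_abs _ _).trans ?_
  rw [Finset.mul_sum]
  refine Finset.sum_le_sum fun i _ => ?_
  rw [abs_mul]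
  gcongr
  exact Finset.single_le_sum (fun j _ => abs_nonneg (c j)) (Finset.mem_univ i)

lemma lin_le_log_sumExp [Nonempty A] (u : A → ι → ℝ) (a : A) (w : ι → ℝ) :
    lin (u a) w ≤ log (sumExp u w) := by
  rw [le_log_iff_exp_le (sumExp_pos u w)]
  exact Finset.single_le_sum (f := fun a => exp (lin (u a) w)) (fun b _ => (exp_pos _).le)
    (Finset.mem_univ a)

lemma log_sumExp_le [Nonempty A] (u : A → ι → ℝ) (w : ι → ℝ) (B : ℝ)
    (h : ∀ a, lin (u a) w ≤ B) : log (sumExp u w) ≤ log (Fintype.card A) + B := by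
  have hc : (0 : ℝ) < Fintype.card A := by exact_mod_cast Fintype.card_pos
  rw [log_le_iff_le_exp (sumExp_pos u w), exp_add, exp_log hc]
  calc sumExp u w ≤ ∑ _a : A, exp B := Finset.sum_le_sum fun a _ => exp_le_exp.2 (h a)
    _ = _ := by simp

lemma continuous_log_sumExp [Nonempty A] (u : A → ι → ℝ) :
    Continuous (fun w => log (sumExp u w)) :=
  (continuous_sumExp u).log fun w => (sumExp_pos u w).ne'

lemma integrable_log_sumExp [Nonempty A] (u : A → ι → ℝ) :
    Integrable (fun w => log (sumExp u w)) (stdG ι) := by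
  have hi : Integrable (fun w : ι → ℝ => log (Fintype.card A) +
    (∑ a, ∑ i, |u a i|) * ∑ i, |w i|) (stdG ι) :=
    (integrable_const _).add (integrable_sum_abs.const_mul _)
  have hc : (1 : ℝ) ≤ Fintype.card A := by exact_mod_cast Fintype.card_pos
  have hl : 0 ≤ log (Fintype.card A) := log_nonneg hc
  refine hi.mono' (continuous_log_sumExp u).aestronglyMeasurable (ae_of_all _ fun w => ?_)
  have hb : ∀ a, |lin (u a) w| ≤ (∑ a, ∑ i, |u a i|) * ∑ i, |w i| := fun a => by
    refine (abs_lin_le _ _).trans ?_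
    have : 0 ≤ ∑ i, |w i| := Finset.sum_nonneg fun _ _ => abs_nonneg _
    gcongr
    exact Finset.single_le_sum (f := fun a => ∑ i, |u a i|)
      (fun b _ => Finset.sum_nonneg fun _ _ => abs_nonneg _) (Finset.mem_univ a)
  rw [norm_eq_abs, abs_le]
  constructor
  · have h1 := lin_le_log_sumExp u (Classical.arbitrary A) w
    have h2 := (abs_le.1 (hb (Classical.arbitrary A))).1
    linarith
  · exact log_sumExp_le u w _ fun a => (le_abs_self _).trans (hb a)

lemma hasDerivAt_integral_log [Nonempty A] (u u' : ℝ → A → ι → ℝ) (K : ℝ)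
    (hu : ∀ θ a i, HasDerivAt (fun t => u t a i) (u' θ a i) θ)
    (hK : ∀ θ a i, |u' θ a i| ≤ K) (θ : ℝ) :
    HasDerivAt (fun t => ∫ w, log (sumExp (u t) w) ∂(stdG ι))
      (∫ w, ∑ a, gibbs (u θ) a w * lin (u' θ a) w ∂(stdG ι)) θ := by
  refine (hasDerivAt_integral_of_dominated_loc_of_deriv_le (s := Set.univ) Filter.univ_mem
    (F' := fun t w => ∑ a, gibbs (u t) a w * lin (u' t a) w)
    (bound := fun w => ∑ a : A, (∑ i : ι, K) * ∑ i, |w i|)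
    (Eventually.of_forall fun t => (continuous_log_sumExp (u t)).aestronglyMeasurable)
    (integrable_log_sumExp _) ?_ ?_ ?_ ?_).2
  · exact Continuous.aestronglyMeasurable (by fun_prop)
  · refine ae_of_all _ fun w t _ => ?_
    refine (norm_sum_le _ _).trans (Finset.sum_le_sum fun a _ => ?_)
    rw [norm_mul, norm_eq_abs, norm_eq_abs]
    calc _ ≤ 1 * |lin (u' t a) w| := by gcongr; exact abs_gibbs_le _ _ _
      _ = |lin (u' t a) w| := one_mul _
      _ ≤ _ := abs_lin_le _ _
      _ ≤ _ := by
        gcongr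
        exact hK _ _ _
  · exact integrable_finsetSum _ fun a _ => integrable_sum_abs.const_mul _
  · refine ae_of_all _ fun w t _ => ?_
    have h1 : ∀ a, HasDerivAt (fun t => lin (u t a) w) (lin (u' t a) w) t := fun a =>
      HasDerivAt.fun_sum fun i _ => (hu t a i).mul_const _
    have h2 : HasDerivAt (fun t => sumExp (u t) w)
      (∑ a, exp (lin (u t a) w) * lin (u' t a) w) t :=
      HasDerivAt.fun_sum fun a _ => (h1 a).exp
    refine (h2.log (sumExp_pos _ w).ne').congr_deriv ?_
    rw [Finset.sum_div]
    exact Finset.sum_congr rfl fun a _ => by rw [gibbs]; ring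

end SF

lemma lin_sum {ι κ : Type*} [Fintype ι] [Fintype κ] (c : ι → ℝ) (d : κ → ℝ) (w : ι ⊕ κ → ℝ) :
    lin (Sum.elim c d) w = lin c (fun i => w (Sum.inl i)) + lin d (fun i => w (Sum.inr i)) := by
  simp [lin]

lemma mp_sum (ι κ : Type*) [Fintype ι] [Fintype κ] :
    MeasurePreserving (fun w : ι ⊕ κ → ℝ => ((fun i => w (Sum.inl i)), (fun i => w (Sum.inr i))))
      (stdG (ι ⊕ κ)) ((stdG ι).prod (stdG κ)) :=
  measurePreserving_sumPiEquivProdPi (X := fun _ => ℝ) (fun _ : ι ⊕ κ => gaussianReal 0 1)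

lemma sf_lse {A ι κ : Type*} [Fintype A] [Fintype ι] [Fintype κ] [Nonempty A]
    (x : A → ι → ℝ) (z : A → κ → ℝ)
    (h : ∀ a b, ∑ i, (x a i - x b i) ^ 2 ≤ ∑ k, (z a k - z b k) ^ 2) :
    ∫ w, log (sumExp x w) ∂(stdG ι) ≤ ∫ w, log (sumExp z w) ∂(stdG κ) := by
  let u : ℝ → A → ι ⊕ κ → ℝ := fun θ a => Sum.elim (fun i => cos θ * x a i) (fun k => sin θ * z a k)
  let u' : ℝ → A → ι ⊕ κ → ℝ := fun θ a =>
    Sum.elim (fun i => -sin θ * x a i) (fun k => cos θ * z a k)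
  have hu : ∀ θ a i, HasDerivAt (fun t => u t a i) (u' θ a i) θ := by
    rintro θ a (i | k)
    · exact (hasDerivAt_cos θ).mul_const _
    · exact (hasDerivAt_sin θ).mul_const _
  have hK : ∀ θ a i, |u' θ a i| ≤ ∑ a, (∑ i, |x a i| + ∑ k, |z a k|) := by
    intro θ a i
    have h0 : (∑ i, |x a i| + ∑ k, |z a k|) ≤ ∑ a, (∑ i, |x a i| + ∑ k, |z a k|) :=
      Finset.single_le_sum (f := fun a => (∑ i, |x a i| + ∑ k, |z a k|))
        (fun b _ => by positivity) (Finset.mem_univ a)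
    refine le_trans ?_ h0
    rcases i with i | k
    · simp only [u', Sum.elim_inl, abs_mul, abs_neg]
      have h1 : |x a i| ≤ ∑ i, |x a i| :=
        Finset.single_le_sum (f := fun i => |x a i|) (fun b _ => by positivity) (Finset.mem_univ i)
      have h2 : 0 ≤ ∑ k, |z a k| := by positivity
      have h3 : |sin θ| * |x a i| ≤ 1 * |x a i| := by gcongr; exact abs_sin_le_one θ
      linarith
    · simp only [u', Sum.elim_inr, abs_mul]
      have h1 : |z a k| ≤ ∑ i, |z a i| :=
        Finset.single_le_sum (f := fun i => |z a i|) (fun b _ => by positivity) (Finset.mem_univ k)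
      have h2 : 0 ≤ ∑ k, |x a k| := by positivity
      have h3 : |cos θ| * |z a k| ≤ 1 * |z a k| := by gcongr; exact abs_cos_le_one θ
      linarith
  have hd := hasDerivAt_integral_log u u' _ hu hK
  have hmono : MonotoneOn (fun t => ∫ w, log (sumExp (u t) w) ∂(stdG (ι ⊕ κ)))
      (Set.Icc 0 (π / 2)) := by
    refine monotoneOn_of_deriv_nonneg (convex_Icc _ _)
      (fun t _ => (hd t).continuousAt.continuousWithinAt)
      (fun t _ => (hd t).differentiableAt.differentiableWithinAt) ?_
    intro t ht
    rw [interior_Icc] at ht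
    rw [(hd t).deriv]
    refine deriv_nonneg _ _ fun a b => ?_
    have : ∑ i, (u' t a i - u' t b i) * (u t a i - u t b i) =
        sin t * cos t * (∑ k, (z a k - z b k) ^ 2 - ∑ i, (x a i - x b i) ^ 2) := by
      rw [Fintype.sum_sum_type, mul_sub, Finset.mul_sum, Finset.mul_sum, add_comm,
        sub_eq_add_neg, ← Finset.sum_neg_distrib]
      congr 1 <;> refine Finset.sum_congr rfl fun i _ => ?_ <;> simp [u, u'] <;> ring
    rw [this]
    have hs : 0 ≤ sin t := sin_nonneg_of_nonneg_of_le_pi ht.1.le (by linarith [ht.2, pi_pos])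
    have hc : 0 ≤ cos t := cos_nonneg_of_mem_Icc ⟨by linarith [ht.1, pi_pos], ht.2.le⟩
    exact mul_nonneg (mul_nonneg hs hc) (sub_nonneg.2 (h a b))
  have key := hmono (Set.left_mem_Icc.2 (by positivity)) (Set.right_mem_Icc.2 (by positivity))
    (by positivity)
  have e0 : ∀ w, sumExp (u 0) w = sumExp x (fun i => w (Sum.inl i)) := by
    intro w; simp only [sumExp, u, lin_sum]; simp [lin]
  have e1 : ∀ w, sumExp (u (π / 2)) w = sumExp z (fun i => w (Sum.inr i)) := by
    intro w; simp only [sumExp, u, lin_sum]; simp [lin]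
  simp only [e0, e1] at key
  have m0 : MeasurePreserving (fun w : ι ⊕ κ → ℝ => (fun i => w (Sum.inl i)))
      (stdG (ι ⊕ κ)) (stdG ι) := measurePreserving_fst.comp (mp_sum ι κ)
  have m1 : MeasurePreserving (fun w : ι ⊕ κ → ℝ => (fun i => w (Sum.inr i)))
      (stdG (ι ⊕ κ)) (stdG κ) := measurePreserving_snd.comp (mp_sum ι κ)
  rw [mp_integral m0 (continuous_log_sumExp x).aestronglyMeasurable,
    mp_integral m1 (continuous_log_sumExp z).aestronglyMeasurable]
  exact key

lemma sf_max {A ι κ : Type*} [Fintype A] [Fintype ι] [Fintype κ] [Nonempty A]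
    (x : A → ι → ℝ) (z : A → κ → ℝ)
    (h : ∀ a b, ∑ i, (x a i - x b i) ^ 2 ≤ ∑ k, (z a k - z b k) ^ 2)
    (H : (κ → ℝ) → ℝ) (hH : Integrable H (stdG κ)) (hzH : ∀ a w, lin (z a) w ≤ H w)
    (S : (ι → ℝ) → ℝ) (hS : Integrable S (stdG ι)) (hSx : ∀ w, ∃ a, S w ≤ lin (x a) w) :
    ∫ w, S w ∂(stdG ι) ≤ ∫ w, H w ∂(stdG κ) := by
  have hlin : ∀ {ι : Type _} [Fintype ι] (n : ℝ) (c w : ι → ℝ),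
      lin (fun i => n * c i) w = n * lin c w := by
    intro ι _ n c w
    rw [lin, lin, Finset.mul_sum]; exact Finset.sum_congr rfl fun i _ => by ring
  have hlin2 : ∀ {ι : Type _} [Fintype ι] (n : ℝ) (c w : ι → ℝ),
      lin (fun i => n * c i) w = n * lin c w := by
    intro ι _ n c w
    rw [lin, lin, Finset.mul_sum]; exact Finset.sum_congr rfl fun i _ => by ring
  have key : ∀ n : ℕ, (n : ℝ) * (∫ w, S w ∂(stdG ι) - ∫ w, H w ∂(stdG κ))
      ≤ log (Fintype.card A) := by
    intro n
    have h1 := sf_lse (fun a i => (n : ℝ) * x a i) (fun a k => (n : ℝ) * z a k) (by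
      intro a b
      have := mul_le_mul_of_nonneg_left (h a b) (sq_nonneg (n : ℝ))
      rw [Finset.mul_sum, Finset.mul_sum] at this
      refine le_trans (le_of_eq ?_) (this.trans (le_of_eq ?_)) <;>
        exact Finset.sum_congr rfl fun i _ => by ring)
    have h2 : (n : ℝ) * ∫ w, S w ∂(stdG ι) ≤
        ∫ w, log (sumExp (fun a i => (n : ℝ) * x a i) w) ∂(stdG ι) := by
      rw [← integral_const_mul]
      refine integral_mono (hS.const_mul _) (integrable_log_sumExp _) fun w => ?_
      obtain ⟨a, ha⟩ := hSx w
      refine le_trans ?_ (lin_le_log_sumExp _ a w)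
      rw [hlin]
      gcongr
    have h3 : ∫ w, log (sumExp (fun a i => (n : ℝ) * z a i) w) ∂(stdG κ) ≤
        log (Fintype.card A) + n * ∫ w, H w ∂(stdG κ) := by
      have : log (Fintype.card A) + n * ∫ w, H w ∂(stdG κ) =
          ∫ w, (log (Fintype.card A) + n * H w) ∂(stdG κ) := by
        rw [integral_add (integrable_const _) (hH.const_mul _), integral_const_mul]; simp
      rw [this]
      refine integral_mono (integrable_log_sumExp _)
        ((integrable_const _).add (hH.const_mul _)) fun w => ?_
      refine log_sumExp_le _ _ _ fun a => ?_
      rw [hlin2]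
      have := hzH a w
      gcongr
    linarith
  by_contra hcon
  push Not at hcon
  obtain ⟨n, hn⟩ := exists_nat_gt (log (Fintype.card A) /
    (∫ w, S w ∂(stdG ι) - ∫ w, H w ∂(stdG κ)))
  rw [div_lt_iff₀ (by linarith)] at hn
  linarith [key n]

lemma sf_sup {Q ι κ : Type*} [Fintype ι] [Fintype κ] [Nonempty Q] [TopologicalSpace Q]
    [TopologicalSpace.SeparableSpace Q]
    (x : Q → ι → ℝ) (hx : Continuous x) (z : Q → κ → ℝ)
    (h : ∀ a b, ∑ i, (x a i - x b i) ^ 2 ≤ ∑ k, (z a k - z b k) ^ 2)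
    (H : (κ → ℝ) → ℝ) (hH : Integrable H (stdG κ)) (hzH : ∀ a w, lin (z a) w ≤ H w)
    (hH0 : 0 ≤ ∫ w, H w ∂(stdG κ))
    (hb : ∀ w, BddAbove (Set.range fun q => lin (x q) w)) :
    ∫ w, (⨆ q, lin (x q) w) ∂(stdG ι) ≤ ∫ w, H w ∂(stdG κ) := by
  by_cases hint : Integrable (fun w => ⨆ q, lin (x q) w) (stdG ι)
  swap
  · rw [integral_undef hint]; exact hH0
  let d := TopologicalSpace.denseSeq Q
  have hd : DenseRange d := TopologicalSpace.denseRange_denseSeq Q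
  let f : ℕ → (ι → ℝ) → ℝ := partialSups (fun k w => lin (x (d k)) w)
  have hfw : ∀ n w, f n w = partialSups (fun k => lin (x (d k)) w) n := fun n w =>
    Pi.partialSups_apply _ _ _
  have hfint : ∀ n, Integrable (f n) (stdG ι) := by
    intro n
    induction n with
    | zero => simpa [f] using integrable_lin (x (d 0))
    | succ n ih =>
      have : f (n + 1) = f n ⊔ (fun w => lin (x (d (n + 1))) w) := by
        simp only [f]
        exact partialSups_add_one _ _
      rw [this]
      exact ih.sup (integrable_lin _)
  have hsup : ∀ w, (⨆ k, lin (x (d k)) w) = ⨆ q, lin (x q) w := by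
    intro w
    have hb' : BddAbove (Set.range fun k => lin (x (d k)) w) :=
      (hb w).mono (by rintro _ ⟨k, rfl⟩; exact ⟨d k, rfl⟩)
    apply le_antisymm
    · exact ciSup_le fun k => le_ciSup (hb w) (d k)
    · refine ciSup_le fun q => ?_
      have hc : Continuous fun q => lin (x q) w := by
        unfold lin
        refine continuous_finsetSum _ fun i _ => ?_
        exact ((continuous_apply i).comp hx).mul continuous_const
      exact hd.induction_on (p := fun q => lin (x q) w ≤ ⨆ k, lin (x (d k)) w) q
        (isClosed_le hc continuous_const) fun k => le_ciSup hb' k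
  have hT := integral_tendsto_of_tendsto_of_monotone hfint hint
    (ae_of_all _ fun w => by
      have := (partialSups (fun k => lin (x (d k)) w)).monotone
      intro a b hab
      simpa only [hfw] using this hab)
    (ae_of_all _ fun w => by
      have hb' : BddAbove (Set.range fun k => lin (x (d k)) w) :=
        (hb w).mono (by rintro _ ⟨k, rfl⟩; exact ⟨d k, rfl⟩)
      have := tendsto_atTop_ciSup (partialSups (fun k => lin (x (d k)) w)).monotone
        (by simpa using hb')
      rw [ciSup_partialSups_eq hb', hsup] at this
      simpa only [hfw] using this)
  refine le_of_tendsto' hT fun n => ?_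
  have : Nonempty {k // k ∈ Finset.Iic n} := ⟨⟨n, by simp⟩⟩
  refine sf_max (A := {k // k ∈ Finset.Iic n}) (fun a => x (d a)) (fun a => z (d a))
    (fun a b => h _ _) H hH (fun a w => hzH _ w) (f n) (hfint n) fun w => ?_
  rw [hfw, partialSups_apply]
  obtain ⟨k, hk, he⟩ := Finset.exists_mem_eq_sup' (Finset.nonempty_Iic (a := n))
    (fun k => lin (x (d k)) w)
  exact ⟨⟨k, hk⟩, he.le⟩

lemma mp_curry {α β : Type*} [Fintype α] [Fintype β] :
    MeasurePreserving (fun (w : α × β → ℝ) (a : α) (b : β) => w (a, b)) (stdG (α × β))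
      (Measure.pi fun _ : α => stdG β) := by
  have hm : Measurable (fun (w : α → β → ℝ) (p : α × β) => w p.1 p.2) := by fun_prop
  have hm2 : Measurable (fun (w : α × β → ℝ) (a : α) (b : β) => w (a, b)) := by fun_prop
  have : (Measure.pi fun _ : α => stdG β).map (fun (w : α → β → ℝ) (p : α × β) => w p.1 p.2)
      = stdG (α × β) := by
    symm
    refine Measure.pi_eq fun s hs => ?_
    rw [Measure.map_apply hm (MeasurableSet.univ_pi hs)]
    have : (fun (w : α → β → ℝ) (p : α × β) => w p.1 p.2) ⁻¹' Set.univ.pi s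
        = Set.univ.pi fun a => Set.univ.pi fun b => s (a, b) := by
      ext w; simp
    rw [this, Measure.pi_pi, Fintype.prod_prod_type]
    simp [Measure.pi_pi]
  refine ⟨hm2, ?_⟩
  rw [← this, Measure.map_map hm2 hm]
  exact Measure.map_id

lemma integral_sq_coord {ι : Type*} [Fintype ι] (i : ι) :
    Integrable (fun w : ι → ℝ => w i ^ 2) (stdG ι) ∧ ∫ w, w i ^ 2 ∂(stdG ι) = 1 := by
  have hmp := measurePreserving_eval (fun _ : ι => gaussianReal 0 1) i
  have h1 : Integrable (fun x : ℝ => x ^ 2) (gaussianReal 0 1) :=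
    (memLp_id_gaussianReal 2).integrable_sq
  have h2 : ∫ x, x ^ 2 ∂(gaussianReal 0 1) = 1 := by
    have := variance_fun_id_gaussianReal (μ := 0) (v := 1)
    rw [variance_eq_integral (by fun_prop)] at this
    simpa using this
  exact ⟨hmp.integrable_comp_of_integrable h1,
    (mp_integral hmp h1.aestronglyMeasurable).symm.trans h2⟩

lemma norm_gauss (M : ℕ) : Integrable (fun w : Fin M → ℝ => √(∑ i, w i ^ 2)) (stdG (Fin M)) ∧
    ∫ w, √(∑ i, w i ^ 2) ∂(stdG (Fin M)) ≤ √M := by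
  rcases Nat.eq_zero_or_pos M with rfl | hM
  · simp
  have hM' : (0 : ℝ) < √M := sqrt_pos.2 (by exact_mod_cast hM)
  have hs : √(M : ℝ) * √M = M := mul_self_sqrt (by positivity)
  have hi : Integrable (fun w : Fin M → ℝ => (∑ i, w i ^ 2)) (stdG (Fin M)) :=
    integrable_finsetSum _ fun i _ => (integral_sq_coord i).1
  have hv : ∫ w, (∑ i, w i ^ 2) ∂(stdG (Fin M)) = M := by
    rw [integral_finsetSum _ fun i _ => (integral_sq_coord i).1]
    simp [integral_sq_coord]
  have hi2 : Integrable (fun w : Fin M → ℝ => (2 * √M)⁻¹ * (∑ i, w i ^ 2) + √M / 2)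
    (stdG (Fin M)) := (hi.const_mul _).add (integrable_const _)
  have hle : ∀ w : Fin M → ℝ, √(∑ i, w i ^ 2) ≤ (2 * √M)⁻¹ * (∑ i, w i ^ 2) + √M / 2 := by
    intro w
    have h0 : 0 ≤ ∑ i, w i ^ 2 := by positivity
    have h1 := sq_sqrt h0
    have h2 : (2 * √M)⁻¹ * (∑ i, w i ^ 2) + √M / 2 - √(∑ i, w i ^ 2) =
      (√(∑ i, w i ^ 2) - √M) ^ 2 / (2 * √M) := by
      rw [sub_sq, h1]; field_simp; ring
    have : 0 ≤ (√(∑ i, w i ^ 2) - √M) ^ 2 / (2 * √M) := by positivity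
    linarith
  have hint : Integrable (fun w : Fin M → ℝ => √(∑ i, w i ^ 2)) (stdG (Fin M)) := by
    refine hi2.mono' (Continuous.aestronglyMeasurable (by fun_prop)) (ae_of_all _ fun w => ?_)
    rw [norm_of_nonneg (sqrt_nonneg _)]
    exact hle w
  refine ⟨hint, (integral_mono hint hi2 hle).trans ?_⟩
  rw [integral_add (hi.const_mul _) (integrable_const _), integral_const_mul, hv]
  simp only [integral_const, probReal_univ, one_smul]
  nth_rewrite 2 [← hs]
  apply le_of_eq
  field_simp
  norm_num

lemma incr {M : ℕ} {J : Type*} [Fintype J] (Δ σ s : ℝ) (hs : s ^ 2 = Δ ^ 2 + σ ^ 2)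
    (v v' : Fin M → ℝ) (Y Y' : J → ℝ) (hv : ∑ i, v i ^ 2 = 1) (hv' : ∑ i, v' i ^ 2 = 1)
    (hY : ∑ j, Y j ^ 2 ≤ σ ^ 2) (hY' : ∑ j, Y' j ^ 2 ≤ σ ^ 2) :
    ∑ i, (Δ * v i - Δ * v' i) ^ 2 + ∑ p : Fin M × J, (v p.1 * Y p.2 - v' p.1 * Y' p.2) ^ 2
      ≤ ∑ j, (Y j - Y' j) ^ 2 + ∑ i, (s * v i - s * v' i) ^ 2 := by
  have ex : ∀ {K : Type _} [Fintype K] (a b : K → ℝ), ∑ k, (a k - b k) ^ 2 =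
      ∑ k, a k ^ 2 + ∑ k, b k ^ 2 - 2 * ∑ k, a k * b k := by
    intro K _ a b
    rw [Finset.mul_sum, ← Finset.sum_add_distrib, ← Finset.sum_sub_distrib]
    exact Finset.sum_congr rfl fun k _ => by ring
  have ex2 : ∀ {K : Type _} [Fintype K] (a b : K → ℝ), ∑ k, (a k - b k) ^ 2 =
      ∑ k, a k ^ 2 + ∑ k, b k ^ 2 - 2 * ∑ k, a k * b k := by
    intro K _ a b
    rw [Finset.mul_sum, ← Finset.sum_add_distrib, ← Finset.sum_sub_distrib]
    exact Finset.sum_congr rfl fun k _ => by ring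
  have t1 : ∀ c : ℝ, ∑ i, (c * v i - c * v' i) ^ 2 = c ^ 2 * (2 - 2 * ∑ i, v i * v' i) := by
    intro c
    have : ∑ i, (c * v i - c * v' i) ^ 2 = c ^ 2 * ∑ i, (v i - v' i) ^ 2 := by
      rw [Finset.mul_sum]; exact Finset.sum_congr rfl fun k _ => by ring
    rw [this, ex, hv, hv']; ring
  have t2 : ∑ p : Fin M × J, (v p.1 * Y p.2 - v' p.1 * Y' p.2) ^ 2 =
      ∑ j, Y j ^ 2 + ∑ j, Y' j ^ 2 - 2 * ((∑ i, v i * v' i) * ∑ j, Y j * Y' j) := by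
    have a1 : ∑ j, Y j ^ 2 = ∑ p : Fin M × J, (v p.1 * Y p.2) ^ 2 := by
      rw [Fintype.sum_prod_type, ← one_mul (∑ j, Y j ^ 2), ← hv, Finset.sum_mul_sum]
      simp only [mul_pow]
    have a2 : ∑ j, Y' j ^ 2 = ∑ p : Fin M × J, (v' p.1 * Y' p.2) ^ 2 := by
      rw [Fintype.sum_prod_type, ← one_mul (∑ j, Y' j ^ 2), ← hv', Finset.sum_mul_sum]
      simp only [mul_pow]
    have a3 : (∑ i, v i * v' i) * ∑ j, Y j * Y' j =
        ∑ p : Fin M × J, (v p.1 * Y p.2) * (v' p.1 * Y' p.2) := by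
      rw [Fintype.sum_prod_type, Finset.sum_mul_sum]
      exact Finset.sum_congr rfl fun i _ => Finset.sum_congr rfl fun j _ => by ring
    rw [a1, a2, a3, ex2]
  have hV : ∑ i, v i * v' i ≤ 1 := by
    have h0 : 0 ≤ ∑ i, (v i - v' i) ^ 2 := by positivity
    rw [ex, hv, hv'] at h0; linarith
  have hP : ∑ j, Y j * Y' j ≤ σ ^ 2 := by
    have h0 : 0 ≤ ∑ i, (Y i - Y' i) ^ 2 := by positivity
    rw [ex2] at h0; linarith
  rw [t1, t1, t2, ex2 Y Y', hs]
  nlinarith [mul_nonneg (sub_nonneg.2 hV) (sub_nonneg.2 hP)]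

lemma matInner_eq {D : Type*} [Fintype D] (X Y : Matrix D D ℝ) :
    matInner X Y = ∑ p : D × D, X p.1 p.2 * Y p.1 p.2 := by
  rw [Fintype.sum_prod_type, Finset.sum_comm]
  simp [matInner, Matrix.trace, Matrix.mul_apply]

section Norms

variable {D : ℕ} {N : Matrix (Fin D) (Fin D) ℝ → ℝ}

lemma N_nonneg (hN_add : ∀ X Y, N (X + Y) ≤ N X + N Y)
    (hN_smul : ∀ (c : ℝ) X, N (c • X) = |c| * N X) (X) : 0 ≤ N X := by
  have h1 := hN_add X ((-1 : ℝ) • X)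
  rw [hN_smul] at h1
  have h2 := hN_smul 0 X
  simp at h2 h1
  linarith

lemma N_sum_le (hN_add : ∀ X Y, N (X + Y) ≤ N X + N Y)
    (hN_smul : ∀ (c : ℝ) X, N (c • X) = |c| * N X) {K : Type*} (s : Finset K)
    (F : K → Matrix (Fin D) (Fin D) ℝ) : N (∑ k ∈ s, F k) ≤ ∑ k ∈ s, N (F k) := by
  classical
  induction s using Finset.induction_on with
  | empty =>
    have h2 := hN_smul 0 0
    simp at h2
    simp [h2]
  | insert a s ha ih =>
    rw [Finset.sum_insert ha, Finset.sum_insert ha]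
    exact (hN_add _ _).trans (by linarith)

lemma N_le (hN_add : ∀ X Y, N (X + Y) ≤ N X + N Y)
    (hN_smul : ∀ (c : ℝ) X, N (c • X) = |c| * N X) :
    ∃ C : ℝ, 0 ≤ C ∧ ∀ X, N X ≤ C * ∑ p : Fin D × Fin D, |X p.1 p.2| := by
  have h0 := N_nonneg hN_add hN_smul
  refine ⟨∑ p : Fin D × Fin D, N (Matrix.single p.1 p.2 1), Finset.sum_nonneg fun p _ => h0 _,
    fun X => ?_⟩
  have hX : X = ∑ p : Fin D × Fin D, X p.1 p.2 • Matrix.single p.1 p.2 (1 : ℝ) := by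
    rw [Fintype.sum_prod_type]
    simpa [Matrix.smul_single] using Matrix.matrix_eq_sum_single X
  calc N X = N (∑ p : Fin D × Fin D, X p.1 p.2 • Matrix.single p.1 p.2 (1 : ℝ)) := by rw [← hX]
    _ ≤ _ := N_sum_le hN_add hN_smul _ _
    _ ≤ _ := by
      rw [Finset.mul_sum]
      refine Finset.sum_le_sum fun p _ => ?_
      rw [hN_smul, mul_comm]
      gcongr
      exact Finset.single_le_sum (f := fun p : Fin D × Fin D => N (Matrix.single p.1 p.2 1))
        (fun p _ => h0 _) (Finset.mem_univ p)

lemma N_cont (hN_add : ∀ X Y, N (X + Y) ≤ N X + N Y)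
    (hN_smul : ∀ (c : ℝ) X, N (c • X) = |c| * N X) : Continuous N := by
  obtain ⟨C, hC, h⟩ := N_le hN_add hN_smul
  have hsub : ∀ X Y, N X - N Y ≤ C * ∑ p : Fin D × Fin D, |X p.1 p.2 - Y p.1 p.2| := by
    intro X Y
    have h1 := hN_add (X - Y) Y
    rw [sub_add_cancel] at h1
    have h2 := h (X - Y)
    simp only [Matrix.sub_apply] at h2
    linarith
  rw [continuous_iff_continuousAt]
  intro Y
  rw [ContinuousAt, tendsto_iff_norm_sub_tendsto_zero]
  have hc : Continuous fun X : Matrix (Fin D) (Fin D) ℝ =>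
      C * ∑ p : Fin D × Fin D, |X p.1 p.2 - Y p.1 p.2| := by
    refine continuous_const.mul (continuous_finsetSum _ fun p _ => ?_)
    exact ((continuous_id.matrix_elem p.1 p.2).sub continuous_const).abs
  have ht := hc.tendsto Y
  simp only [sub_self, abs_zero, Finset.sum_const_zero, mul_zero] at ht
  refine squeeze_zero (fun _ => norm_nonneg _) (fun X => ?_) ht
  rw [norm_eq_abs, abs_le]
  constructor
  · have := hsub Y X
    simp only [abs_sub_comm (Y _ _)] at this
    linarith
  · exact hsub X Y

lemma inner_le_N (hN_add : ∀ X Y, N (X + Y) ≤ N X + N Y)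
    (hN_smul : ∀ (c : ℝ) X, N (c • X) = |c| * N X)
    (hN_eq_zero : ∀ X, N X = 0 ↔ X = 0) (G Y : Matrix (Fin D) (Fin D) ℝ)
    (hY : dualNorm N Y = 1) : matInner G Y ≤ N G := by
  have hb : BddAbove {c : ℝ | ∃ Z, N Z = 1 ∧ c = matInner Z Y} := by
    by_contra hb
    rw [dualNorm, Real.sSup_of_not_bddAbove hb] at hY
    exact zero_ne_one hY
  rcases eq_or_lt_of_le (N_nonneg hN_add hN_smul G) with h0 | h0
  · rw [← h0, (hN_eq_zero G).1 h0.symm]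
    simp [matInner]
  · have hm : matInner ((N G)⁻¹ • G) Y ≤ dualNorm N Y := by
      refine le_csSup hb ⟨_, ?_, rfl⟩
      rw [hN_smul, abs_of_pos (inv_pos.2 h0)]
      exact inv_mul_cancel₀ h0.ne'
    rw [hY] at hm
    have : matInner ((N G)⁻¹ • G) Y = (N G)⁻¹ * matInner G Y := by
      simp [matInner]
    rw [this, inv_mul_le_iff₀ h0, mul_one] at hm
    exact hm

lemma frob_bdd (hN_add : ∀ X Y, N (X + Y) ≤ N X + N Y)
    (hN_smul : ∀ (c : ℝ) X, N (c • X) = |c| * N X)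
    (hN_eq_zero : ∀ X, N X = 0 ↔ X = 0) :
    ∃ K : ℝ, 0 ≤ K ∧ ∀ Z, dualNorm N Z = 1 → √(∑ p : Fin D × Fin D, Z p.1 p.2 ^ 2) ≤ K := by
  obtain ⟨C, hC, h⟩ := N_le hN_add hN_smul
  refine ⟨C * ∑ p : Fin D × Fin D, 1, by positivity, fun Z hZ => ?_⟩
  set r := √(∑ p : Fin D × Fin D, Z p.1 p.2 ^ 2) with hr
  have hr0 : 0 ≤ r := sqrt_nonneg _
  have h1 := inner_le_N hN_add hN_smul hN_eq_zero Z Z hZ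
  have h2 : matInner Z Z = r ^ 2 := by
    rw [matInner_eq, hr, sq_sqrt (by positivity)]
    exact Finset.sum_congr rfl fun p _ => by ring
  have h3 : ∑ p : Fin D × Fin D, |Z p.1 p.2| ≤ (∑ p : Fin D × Fin D, 1) * r := by
    rw [Finset.sum_mul]
    refine Finset.sum_le_sum fun p _ => ?_
    rw [one_mul, hr]
    refine abs_le_sqrt ?_
    exact Finset.single_le_sum (f := fun p : Fin D × Fin D => Z p.1 p.2 ^ 2)
      (fun p _ => sq_nonneg _) (Finset.mem_univ p)
  have h4 : r ^ 2 ≤ (C * ∑ p : Fin D × Fin D, 1) * r := by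
    rw [← h2]
    refine (h1.trans (h Z)).trans ?_
    rw [mul_assoc]
    gcongr
  rcases eq_or_lt_of_le hr0 with h0 | h0
  · rw [← h0]; positivity
  · rw [sq] at h4
    exact le_of_mul_le_mul_right h4 h0

lemma frob_le_sigma (hN_add : ∀ X Y, N (X + Y) ≤ N X + N Y)
    (hN_smul : ∀ (c : ℝ) X, N (c • X) = |c| * N X)
    (hN_eq_zero : ∀ X, N X = 0 ↔ X = 0) (Z) (hZ : dualNorm N Z = 1) :
    ∑ p : Fin D × Fin D, Z p.1 p.2 ^ 2 ≤ sigmaP N ^ 2 := by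
  obtain ⟨K, hK, h⟩ := frob_bdd hN_add hN_smul hN_eq_zero
  have h1 : √(∑ p : Fin D × Fin D, Z p.1 p.2 ^ 2) ≤ sigmaP N := by
    refine le_csSup ⟨K, ?_⟩ ⟨Z, hZ, ?_⟩
    · rintro _ ⟨W, hW, rfl⟩
      have := h W hW
      rwa [Fintype.sum_prod_type] at this
    · rw [Fintype.sum_prod_type]
  have h2 := pow_le_pow_left₀ (sqrt_nonneg _) h1 2
  rwa [sq_sqrt (by positivity)] at h2

end Norms

/-- For `g` a standard Gaussian vector in `ℝ^M` and `G₁,…,G_M` i.i.d. standard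
Gaussian `D × D` matrices, all independent,
`E[sup_{‖v‖=1, ‖Y‖_d=1} Δ⟨g,v⟩ + ⟨Σ v_i G_i, Y⟩] ≤ E‖G‖_p + √(M(Δ² + σ(‖G‖_p)²))`. -/
theorem stmt11 (D M : ℕ) (N : Matrix (Fin D) (Fin D) ℝ → ℝ)
    (hN_add : ∀ X Y, N (X + Y) ≤ N X + N Y)
    (hN_smul : ∀ (c : ℝ) X, N (c • X) = |c| * N X)
    (hN_eq_zero : ∀ X, N X = 0 ↔ X = 0)
    (Δ : ℝ) (hΔ : 0 < Δ) :
    (∫ p : (Fin M → ℝ) × (Fin M → Fin D → Fin D → ℝ),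
        (⨆ q : {q : (Fin M → ℝ) × Matrix (Fin D) (Fin D) ℝ //
            Real.sqrt (∑ i, q.1 i ^ 2) = 1 ∧ dualNorm N q.2 = 1},
          Δ * (∑ i, p.1 i * q.1.1 i) +
            matInner (∑ i, q.1.1 i • Matrix.of (p.2 i)) q.1.2)
        ∂((Measure.pi fun _ : Fin M => gaussianReal 0 1).prod
            (Measure.pi fun _ : Fin M => iidGaussianMatrix D)))
      ≤ (∫ G : Fin D → Fin D → ℝ, N (Matrix.of G) ∂iidGaussianMatrix D) +
        Real.sqrt (M * (Δ ^ 2 + sigmaP N ^ 2)) := by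
  have hN0 := N_nonneg hN_add hN_smul
  have hR1 : 0 ≤ ∫ G : Fin D → Fin D → ℝ, N (Matrix.of G) ∂iidGaussianMatrix D :=
    integral_nonneg fun G => hN0 _
  rcases isEmpty_or_nonempty {q : (Fin M → ℝ) × Matrix (Fin D) (Fin D) ℝ //
            Real.sqrt (∑ i, q.1 i ^ 2) = 1 ∧ dualNorm N q.2 = 1} with hQ | hQ
  · simp only [Real.iSup_of_isEmpty, integral_zero]
    positivity
  set Q := {q : (Fin M → ℝ) × Matrix (Fin D) (Fin D) ℝ //
            Real.sqrt (∑ i, q.1 i ^ 2) = 1 ∧ dualNorm N q.2 = 1} with hQdef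
  have hsc : SecondCountableTopology (Matrix (Fin D) (Fin D) ℝ) :=
    inferInstanceAs (SecondCountableTopology (Fin D → Fin D → ℝ))
  obtain ⟨K, hK0, hK⟩ := frob_bdd hN_add hN_smul hN_eq_zero
  obtain ⟨C, hC0, hC⟩ := N_le hN_add hN_smul
  let s := √(Δ ^ 2 + sigmaP N ^ 2)
  have hs : s ^ 2 = Δ ^ 2 + sigmaP N ^ 2 := sq_sqrt (by positivity)
  have hs0 : 0 ≤ s := sqrt_nonneg _
  -- coefficient vectors
  let x : Q → (Fin M ⊕ (Fin M × (Fin D × Fin D))) → ℝ := fun q =>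
    Sum.elim (fun i => Δ * q.1.1 i) (fun p => q.1.1 p.1 * q.1.2 p.2.1 p.2.2)
  let z : Q → ((Fin D × Fin D) ⊕ Fin M) → ℝ := fun q =>
    Sum.elim (fun p => q.1.2 p.1 p.2) (fun i => s * q.1.1 i)
  have hx : Continuous x := by
    refine continuous_pi ?_
    rintro (i | p)
    · exact continuous_const.mul
        ((continuous_apply i).comp (continuous_fst.comp continuous_subtype_val))
    · exact ((continuous_apply p.1).comp (continuous_fst.comp continuous_subtype_val)).mul
        ((continuous_snd.comp continuous_subtype_val).matrix_elem p.2.1 p.2.2)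
  have hv : ∀ q : Q, ∑ i, q.1.1 i ^ 2 = 1 := fun q => by
    have := q.2.1
    rwa [sqrt_eq_one] at this
  have hincr : ∀ a b : Q, ∑ i, (x a i - x b i) ^ 2 ≤ ∑ k, (z a k - z b k) ^ 2 := by
    intro a b
    rw [Fintype.sum_sum_type, Fintype.sum_sum_type]
    exact incr Δ (sigmaP N) s hs a.1.1 b.1.1 (fun p : Fin D × Fin D => a.1.2 p.1 p.2)
      (fun p => b.1.2 p.1 p.2) (hv a) (hv b)
      (frob_le_sigma hN_add hN_smul hN_eq_zero _ a.2.2)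
      (frob_le_sigma hN_add hN_smul hN_eq_zero _ b.2.2)
  let H1 : (Fin D × Fin D → ℝ) → ℝ := fun w => N (Matrix.of fun j k => w (j, k))
  let H2 : (Fin M → ℝ) → ℝ := fun w => s * √(∑ i, w i ^ 2)
  let H : ((Fin D × Fin D) ⊕ Fin M → ℝ) → ℝ := fun w =>
    H1 (fun p => w (Sum.inl p)) + H2 (fun i => w (Sum.inr i))
  have m0 : MeasurePreserving (fun w : (Fin D × Fin D) ⊕ Fin M → ℝ => (fun i => w (Sum.inl i)))
      (stdG ((Fin D × Fin D) ⊕ Fin M)) (stdG (Fin D × Fin D)) :=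
    measurePreserving_fst.comp (mp_sum _ _)
  have m1 : MeasurePreserving (fun w : (Fin D × Fin D) ⊕ Fin M → ℝ => (fun i => w (Sum.inr i)))
      (stdG ((Fin D × Fin D) ⊕ Fin M)) (stdG (Fin M)) :=
    measurePreserving_snd.comp (mp_sum _ _)
  have hNc := N_cont hN_add hN_smul
  have hH1c : Continuous H1 :=
    hNc.comp (continuous_matrix fun j k => continuous_apply (j, k))
  have hH1 : Integrable H1 (stdG (Fin D × Fin D)) := by
    refine ((integrable_sum_abs (ι := Fin D × Fin D)).const_mul C).mono'
      hH1c.aestronglyMeasurable (ae_of_all _ fun w => ?_)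
    rw [norm_of_nonneg (hN0 _)]
    exact hC _
  have hH2 : Integrable H2 (stdG (Fin M)) := (norm_gauss M).1.const_mul s
  have hi1 := m0.integrable_comp_of_integrable hH1
  have hi2 := m1.integrable_comp_of_integrable hH2
  have hH : Integrable H (stdG ((Fin D × Fin D) ⊕ Fin M)) := hi1.add hi2
  have hHval : ∫ w, H w ∂(stdG ((Fin D × Fin D) ⊕ Fin M)) =
      ∫ w, H1 w ∂(stdG (Fin D × Fin D)) + s * ∫ w, √(∑ i, w i ^ 2) ∂(stdG (Fin M)) := by
    rw [mp_integral m0 hH1.aestronglyMeasurable, ← integral_const_mul]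
    rw [show ∫ w : Fin M → ℝ, s * √(∑ i, w i ^ 2) ∂(stdG (Fin M)) = _ from
      mp_integral m1 hH2.aestronglyMeasurable]
    exact integral_add hi1 hi2
  have hH1val : ∫ w, H1 w ∂(stdG (Fin D × Fin D)) =
      ∫ G : Fin D → Fin D → ℝ, N (Matrix.of G) ∂iidGaussianMatrix D := by
    have hc : Continuous fun G : Fin D → Fin D → ℝ => N (Matrix.of G) := hNc
    exact (mp_integral (mp_curry (α := Fin D) (β := Fin D)) hc.aestronglyMeasurable).symm
  have hHle : ∫ w, H w ∂(stdG ((Fin D × Fin D) ⊕ Fin M)) ≤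
      (∫ G : Fin D → Fin D → ℝ, N (Matrix.of G) ∂iidGaussianMatrix D) +
        Real.sqrt (M * (Δ ^ 2 + sigmaP N ^ 2)) := by
    rw [hHval, hH1val, sqrt_mul (by positivity), mul_comm (√(M : ℝ))]
    have := mul_le_mul_of_nonneg_left (norm_gauss M).2 hs0
    exact add_le_add le_rfl this
  refine le_trans ?_ hHle
  have hHpos : ∀ w, 0 ≤ H w := fun w => add_nonneg (hN0 _) (mul_nonneg hs0 (sqrt_nonneg _))
  have hzH : ∀ a w, lin (z a) w ≤ H w := by
    intro a w
    simp only [z, lin_sum, H]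
    refine add_le_add ?_ ?_
    · have := inner_le_N hN_add hN_smul hN_eq_zero
        (Matrix.of fun j k => w (Sum.inl (j, k))) a.1.2 a.2.2
      refine le_trans (le_of_eq ?_) this
      rw [matInner_eq, lin]
      exact Finset.sum_congr rfl fun p _ => by simp [mul_comm]
    · have hcs := Finset.sum_mul_sq_le_sq_mul_sq Finset.univ a.1.1 (fun i => w (Sum.inr i))
      rw [hv a, one_mul] at hcs
      have h1 := le_sqrt_of_sq_le hcs
      have h2 : lin (fun i => s * a.1.1 i) (fun i => w (Sum.inr i)) =
          s * ∑ i, a.1.1 i * w (Sum.inr i) := by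
        rw [lin, Finset.mul_sum]; exact Finset.sum_congr rfl fun i _ => by ring
      rw [h2]
      exact mul_le_mul_of_nonneg_left h1 hs0
  have hb : ∀ w, BddAbove (Set.range fun q => lin (x q) w) := by
    intro w
    refine ⟨(∑ _i : Fin M ⊕ (Fin M × (Fin D × Fin D)), (|Δ| + K)) * ∑ i, |w i|, ?_⟩
    rintro _ ⟨q, rfl⟩
    refine (le_abs_self _).trans ((abs_lin_le _ _).trans ?_)
    refine mul_le_mul_of_nonneg_right ?_ (by positivity)
    refine Finset.sum_le_sum fun i _ => ?_
    have hvi : ∀ i, |q.1.1 i| ≤ 1 := by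
      intro i
      refine le_trans (abs_le_sqrt ?_) q.2.1.le
      exact Finset.single_le_sum (f := fun i => q.1.1 i ^ 2)
        (fun p _ => sq_nonneg _) (Finset.mem_univ i)
    have hYi : ∀ p : Fin D × Fin D, |q.1.2 p.1 p.2| ≤ K := by
      intro p
      refine le_trans (abs_le_sqrt ?_) (hK q.1.2 q.2.2)
      exact Finset.single_le_sum (f := fun p : Fin D × Fin D => q.1.2 p.1 p.2 ^ 2)
        (fun p _ => sq_nonneg _) (Finset.mem_univ p)
    rcases i with i | p
    · simp only [x, Sum.elim_inl, abs_mul]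
      have := mul_le_mul_of_nonneg_left (hvi i) (abs_nonneg Δ)
      linarith
    · simp only [x, Sum.elim_inr, abs_mul]
      have := mul_le_mul (hvi p.1) (hYi p.2) (abs_nonneg _) zero_le_one
      have h2 := abs_nonneg Δ
      linarith
  have hsc2 : SecondCountableTopology Q := TopologicalSpace.Subtype.secondCountableTopology _
  have hmain := sf_sup x hx z hincr H hH hzH (integral_nonneg hHpos) hb
  refine le_trans (le_of_eq ?_) hmain
  -- transfer of the measure, by an equivalence
  let g : ((Fin M → ℝ) × (Fin M → Fin D → Fin D → ℝ)) → (Fin M ⊕ (Fin M × (Fin D × Fin D)) → ℝ) :=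
    fun p => Sum.elim p.1 (fun r => p.2 r.1 r.2.1 r.2.2)
  have hmp : MeasurePreserving (fun w : Fin M ⊕ (Fin M × (Fin D × Fin D)) → ℝ =>
      ((fun i => w (Sum.inl i)), (fun i j k => w (Sum.inr (i, (j, k))))))
      (stdG (Fin M ⊕ (Fin M × (Fin D × Fin D))))
      ((Measure.pi fun _ : Fin M => gaussianReal 0 1).prod
            (Measure.pi fun _ : Fin M => iidGaussianMatrix D)) := by
    have a1 : MeasurePreserving (fun (w : Fin M → (Fin D × Fin D → ℝ)) i j k => w i (j, k))
        (Measure.pi fun _ : Fin M => stdG (Fin D × Fin D))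
        (Measure.pi fun _ : Fin M => iidGaussianMatrix D) :=
      measurePreserving_pi _ _ fun _ => mp_curry (α := Fin D) (β := Fin D)
    have a2 := a1.comp (mp_curry (α := Fin M) (β := Fin D × Fin D))
    exact ((MeasurePreserving.id (stdG (Fin M))).prod a2).comp (mp_sum _ _)
  have hge : Measurable g := by
    rw [measurable_pi_iff]
    rintro (i | r)
    · simp only [g, Sum.elim_inl]; fun_prop
    · simp only [g, Sum.elim_inr]; fun_prop
  let e : (Fin M ⊕ (Fin M × (Fin D × Fin D)) → ℝ) ≃ᵐ
      ((Fin M → ℝ) × (Fin M → Fin D → Fin D → ℝ)) :=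
    { toFun := fun w => ((fun i => w (Sum.inl i)), (fun i j k => w (Sum.inr (i, (j, k)))))
      invFun := g
      left_inv := fun w => by ext (i | r) <;> rfl
      right_inv := fun p => rfl
      measurable_toFun := hmp.measurable
      measurable_invFun := hge }
  have hmp' : MeasurePreserving e _ _ := hmp
  rw [← hmp'.integral_comp' (g := fun p : (Fin M → ℝ) × (Fin M → Fin D → Fin D → ℝ) =>
    (⨆ q : Q, Δ * (∑ i, p.1 i * q.1.1 i) +
            matInner (∑ i, q.1.1 i • Matrix.of (p.2 i)) q.1.2))]
  congr 1
  ext w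
  congr 1
  ext q
  have he1 : ∀ i, (e w).1 i = w (Sum.inl i) := fun _ => rfl
  have he2 : ∀ i j k, (e w).2 i j k = w (Sum.inr (i, (j, k))) := fun _ _ _ => rfl
  simp only [x, lin_sum]
  congr 1
  · rw [lin, Finset.mul_sum]
    exact Finset.sum_congr rfl fun i _ => by rw [he1]; ring
  · rw [matInner_eq, lin, Fintype.sum_prod_type (α₁ := Fin M), Finset.sum_comm]
    refine Finset.sum_congr rfl fun p _ => ?_
    rw [Matrix.sum_apply, Finset.sum_mul]
    exact Finset.sum_congr rfl fun i _ => by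
      rw [Matrix.smul_apply, Matrix.of_apply, he2, smul_eq_mul]; ring
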